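/- arXiv:1404.3327 — 5 statements merged into one kernel-verified Lean document; each statement's English description precedes it below -/
import Mathlib

section
/- Let ι be a nonempty finite index type, A : Matrix ι ι ℝ an entrywise nonnegative matrix, σ s : ℝ, and w : ι → ℝ a σ-suitable vector for A. Assume s > σ, and let μ = max over k of (σ - A k k)/(s - A k k) and r = |1 - ω| + ω·μ. Suppose 0 < ω < 2/(1 + μ). If x̄ : ι → ℝ satisfies (s • 1 - A).mulVec x̄ = b, and x' is obtained from x : ι → ℝ by a step-asynchronous SOR update for the system (s • 1 - A) x = b with relaxation parameter ω, then ‖x̄ - x'‖_w ≤ r · ‖x̄ - x‖_w. -/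
open Finset

/-- The `w`-norm of a vector `x`: the maximum over `i` of `|x i| / w i`. -/
noncomputable def wNorm {ι : Type*} [Fintype ι] [Nonempty ι] (w x : ι → ℝ) : ℝ :=
  Finset.univ.sup' Finset.univ_nonempty (fun i => |x i| / w i)

/-!
The exact solution is a fixed point of every relaxed row update. If the off-diagonal part of row `i`
of the system matrix has weighted size at most `μ` times the diagonal entry, and all the errors
entering the update are at most `E * w j`, then the error leaving it is at most `r * E * w i` with
`r = ‖1 - ω‖ + ‖ω‖ * μ`. As `r ≤ 1`, components that have already been updated still have error at
most `E * w j`, so well-founded induction along the dependency relation `j ∈ N i` gives the bound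
for all components at once.
-/

section WNorm

variable {ι : Type*} [Fintype ι] [Nonempty ι] {w : ι → ℝ}

theorem wNorm_le_iff (hw : ∀ i, 0 < w i) {x : ι → ℝ} {c : ℝ} :
    wNorm w x ≤ c ↔ ∀ i, |x i| ≤ c * w i := by
  simp [wNorm, div_le_iff₀ (hw _)]

theorem abs_le_wNorm_mul (hw : ∀ i, 0 < w i) (x : ι → ℝ) (i : ι) : |x i| ≤ wNorm w x * w i :=
  (wNorm_le_iff hw).1 le_rfl i

theorem wNorm_nonneg (hw : ∀ i, 0 < w i) (x : ι → ℝ) : 0 ≤ wNorm w x := by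
  obtain ⟨i⟩ := ‹Nonempty ι›
  exact nonneg_of_mul_nonneg_left ((abs_nonneg _).trans (abs_le_wNorm_mul hw x i)) (hw i)

theorem wNorm_norm (w x : ι → ℝ) : wNorm w (fun i => ‖x i‖) = wNorm w x := by
  simp [wNorm]

end WNorm

section SORUpdate

variable {ι 𝕜 : Type*} [Fintype ι] [DecidableEq ι]

/-- The relaxed value of component `i` for the system `M x = b`: the previous value is `x i`, and
the off-diagonal terms of row `i` are evaluated at `y`. Keeping `x` and `y` apart covers the
Jacobi, Gauss–Seidel and asynchronous variants. -/
def sorUpdate [Field 𝕜] (M : Matrix ι ι 𝕜) (b : ι → 𝕜) (ω : 𝕜) (x y : ι → 𝕜) (i : ι) : 𝕜 :=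
  (1 - ω) * x i + ω / M i i * (b i - ∑ j ∈ univ.erase i, M i j * y j)

/-- `x'` is obtained from `x` by a step-asynchronous SOR step for `M x = b`, where component `i`
reads the new values on `N i` and the old ones elsewhere. Well-foundedness of the dependency
relation says that the components can be computed in some order. -/
structure IsStepAsyncSOR [Field 𝕜] (M : Matrix ι ι 𝕜) (b : ι → 𝕜) (ω : 𝕜) (N : ι → Finset ι)
    (x x' : ι → 𝕜) : Prop where
  wellFounded : WellFounded fun j i => j ∈ N i
  apply_eq : ∀ i, x' i = sorUpdate M b ω x ((N i).piecewise x' x) i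

/-- Diagonal dominance of `M` with weights `w` and ratio `μ`, i.e. the Jacobi iteration matrix of
`M` has operator norm at most `μ` for the `w`-norm. -/
structure IsWeightedDiagDominant [NormedField 𝕜] (M : Matrix ι ι 𝕜) (w : ι → ℝ) (μ : ℝ) :
    Prop where
  diag_ne_zero : ∀ i, M i i ≠ 0
  sum_le : ∀ i, ∑ j ∈ univ.erase i, ‖M i j‖ * w j ≤ μ * (‖M i i‖ * w i)

theorem mulVec_eq_diag_add_sum_erase {R : Type*} [NonUnitalNonAssocSemiring R]
    (M : Matrix ι ι R) (x : ι → R) (i : ι) :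
    M.mulVec x i = M i i * x i + ∑ j ∈ univ.erase i, M i j * x j :=
  (add_sum_erase _ (fun j => M i j * x j) (mem_univ i)).symm

theorem sorUpdate_mulVec_self [Field 𝕜] {M : Matrix ι ι 𝕜} {i : ι} (hM : M i i ≠ 0) (ω : 𝕜)
    (x : ι → 𝕜) : sorUpdate M (M.mulVec x) ω x x i = x i := by
  rw [sorUpdate, mulVec_eq_diag_add_sum_erase, add_sub_cancel_right]
  field_simp
  ring

theorem sorUpdate_sub_sorUpdate [Field 𝕜] (M : Matrix ι ι 𝕜) (b : ι → 𝕜) (ω : 𝕜)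
    (x₁ y₁ x₂ y₂ : ι → 𝕜) (i : ι) :
    sorUpdate M b ω x₁ y₁ i - sorUpdate M b ω x₂ y₂ i =
      (1 - ω) * (x₁ i - x₂ i) - ω / M i i * ∑ j ∈ univ.erase i, M i j * (y₁ j - y₂ j) := by
  simp only [sorUpdate, mul_sub (M i _), sum_sub_distrib]
  ring

theorem IsWeightedDiagDominant.norm_sorUpdate_sub_le [NormedField 𝕜] {M : Matrix ι ι 𝕜}
    {w : ι → ℝ} {μ E : ℝ} (hM : IsWeightedDiagDominant M w μ) (hE : 0 ≤ E) (b : ι → 𝕜) (ω : 𝕜)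
    {x₁ y₁ x₂ y₂ : ι → 𝕜} {i : ι} (hx : ‖x₁ i - x₂ i‖ ≤ E * w i)
    (hy : ∀ j, j ≠ i → ‖y₁ j - y₂ j‖ ≤ E * w j) :
    ‖sorUpdate M b ω x₁ y₁ i - sorUpdate M b ω x₂ y₂ i‖ ≤ (‖1 - ω‖ + ‖ω‖ * μ) * E * w i := by
  have hdiag : ‖M i i‖ ≠ 0 := norm_ne_zero_iff.2 (hM.diag_ne_zero i)
  have hsum : ‖∑ j ∈ univ.erase i, M i j * (y₁ j - y₂ j)‖ ≤ E * (μ * (‖M i i‖ * w i)) :=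
    calc
      _ ≤ ∑ j ∈ univ.erase i, ‖M i j‖ * (E * w j) := norm_sum_le_of_le _ fun j hj => by
        rw [norm_mul]
        gcongr
        exact hy j (ne_of_mem_erase hj)
      _ = E * ∑ j ∈ univ.erase i, ‖M i j‖ * w j := by
        simp only [mul_sum, mul_left_comm]
      _ ≤ _ := by gcongr; exact hM.sum_le i
  rw [sorUpdate_sub_sorUpdate]
  calc
    _ ≤ ‖1 - ω‖ * ‖x₁ i - x₂ i‖ +
        ‖ω‖ / ‖M i i‖ * ‖∑ j ∈ univ.erase i, M i j * (y₁ j - y₂ j)‖ := by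
      rw [← norm_div, ← norm_mul, ← norm_mul]
      exact norm_sub_le _ _
    _ ≤ ‖1 - ω‖ * (E * w i) + ‖ω‖ / ‖M i i‖ * (E * (μ * (‖M i i‖ * w i))) := by gcongr
    _ = (‖1 - ω‖ + ‖ω‖ * μ) * E * w i := by field_simp

theorem stepAsyncSOR_error_contraction_general [Nonempty ι] [NormedField 𝕜] {M : Matrix ι ι 𝕜}
    {w : ι → ℝ} {μ : ℝ} {b xbar x x' : ι → 𝕜} {ω : 𝕜} {N : ι → Finset ι}
    (hM : IsWeightedDiagDominant M w μ) (hw : ∀ i, 0 < w i) (hω : ‖1 - ω‖ + ‖ω‖ * μ ≤ 1)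
    (hxbar : M.mulVec xbar = b) (hstep : IsStepAsyncSOR M b ω N x x') :
    wNorm w (fun i => ‖xbar i - x' i‖) ≤
      (‖1 - ω‖ + ‖ω‖ * μ) * wNorm w (fun i => ‖xbar i - x i‖) := by
  subst hxbar
  set E := wNorm w (fun i => ‖xbar i - x i‖)
  have hE : 0 ≤ E := wNorm_nonneg hw _
  have hold (i : ι) : ‖xbar i - x i‖ ≤ E * w i := by
    simpa only [abs_norm] using abs_le_wNorm_mul hw (fun i => ‖xbar i - x i‖) i
  simp only [wNorm_le_iff hw, abs_norm]
  intro i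
  induction i using hstep.wellFounded.induction with
  | _ i ih =>
    have hnew (j : ι) (hj : j ∈ N i) : ‖xbar j - x' j‖ ≤ E * w j :=
      (ih j hj).trans <| by
        have := (hw j).le
        gcongr
        exact mul_le_of_le_one_left hE hω
    rw [hstep.apply_eq i]
    nth_rw 1 [← sorUpdate_mulVec_self (hM.diag_ne_zero i) ω xbar]
    refine hM.norm_sorUpdate_sub_le hE _ ω (hold i) fun j _ => ?_
    by_cases hj : j ∈ N i
    · simpa only [piecewise_eq_of_mem _ _ _ hj] using hnew j hj
    · simpa only [piecewise_eq_of_notMem _ _ _ hj] using hold j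

end SORUpdate

theorem diag_le_of_mulVec_le {ι R : Type*} [Fintype ι] [Semiring R] [LinearOrder R]
    [IsStrictOrderedRing R] {A : Matrix ι ι R} {w : ι → R} {σ : R} {i : ι}
    (hA : ∀ j, j ≠ i → 0 ≤ A i j) (hw : ∀ j, 0 < w j) (hsuit : A.mulVec w i ≤ σ * w i) :
    A i i ≤ σ := by
  classical
  rw [mulVec_eq_diag_add_sum_erase] at hsuit
  have hoff : 0 ≤ ∑ j ∈ univ.erase i, A i j * w j :=
    sum_nonneg fun j hj => mul_nonneg (hA j (ne_of_mem_erase hj)) (hw j).le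
  exact le_of_mul_le_mul_right ((le_add_of_nonneg_right hoff).trans hsuit) (hw i)

section ShiftedSystem

variable {ι : Type*} [Fintype ι] [DecidableEq ι]

theorem sum_erase_mul_piecewise {R : Type*} [NonUnitalNonAssocSemiring R] {S : Finset ι} {i : ι}
    (hi : i ∉ S) (a x y : ι → R) :
    ∑ j ∈ univ.erase i, a j * S.piecewise y x j =
      ∑ j ∈ S, a j * y j + ∑ j with j ∉ S ∧ j ≠ i, a j * x j := by
  simp only [piecewise, mul_ite, sum_ite]
  congr 2 <;> grind

theorem sorUpdate_smul_one_sub_piecewise {𝕜 : Type*} [Field 𝕜] (A : Matrix ι ι 𝕜)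
    (s ω : 𝕜) (b x y : ι → 𝕜) {S : Finset ι} {i : ι} (hi : i ∉ S) :
    sorUpdate (s • (1 : Matrix ι ι 𝕜) - A) b ω x (S.piecewise y x) i =
      (1 - ω) * x i + ω / (s - A i i) *
        (b i + ∑ j ∈ S, A i j * y j + ∑ j with j ∉ S ∧ j ≠ i, A i j * x j) := by
  have hoff : ∑ j ∈ univ.erase i, (s • (1 : Matrix ι ι 𝕜) - A) i j * S.piecewise y x j =
      -∑ j ∈ univ.erase i, A i j * S.piecewise y x j := by
    rw [← sum_neg_distrib]
    refine sum_congr rfl fun j hj => ?_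
    simp [Matrix.one_apply_ne' (ne_of_mem_erase hj)]
  rw [sorUpdate, hoff, sum_erase_mul_piecewise hi, sub_neg_eq_add, add_assoc (b i)]
  simp

theorem isWeightedDiagDominant_smul_one_sub {A : Matrix ι ι ℝ} {w : ι → ℝ} {σ s μ : ℝ}
    (hA : ∀ i j, j ≠ i → 0 ≤ A i j) (hw : ∀ i, 0 < w i) (hsuit : ∀ i, A.mulVec w i ≤ σ * w i)
    (hs : σ < s) (hμ : ∀ i, (σ - A i i) / (s - A i i) ≤ μ) :
    IsWeightedDiagDominant (s • (1 : Matrix ι ι ℝ) - A) w μ := by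
  have hdiag (i : ι) : (s • (1 : Matrix ι ι ℝ) - A) i i = s - A i i := by simp
  have hpos (i : ι) : 0 < s - A i i :=
    sub_pos.2 ((diag_le_of_mulVec_le (hA i) hw (hsuit i)).trans_lt hs)
  refine ⟨fun i => hdiag i ▸ (hpos i).ne', fun i => ?_⟩
  rw [hdiag, Real.norm_of_nonneg (hpos i).le]
  calc
    _ = ∑ j ∈ univ.erase i, A i j * w j := sum_congr rfl fun j hj => by
      have hj := ne_of_mem_erase hj
      simp [Matrix.one_apply_ne' hj, abs_of_nonneg (hA i j hj)]
    _ ≤ (σ - A i i) * w i := by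
      linarith [hsuit i, mulVec_eq_diag_add_sum_erase A w i]
    _ ≤ μ * (s - A i i) * w i :=
      mul_le_mul_of_nonneg_right ((div_le_iff₀ (hpos i)).1 (hμ i)) (hw i).le
    _ = μ * ((s - A i i) * w i) := mul_assoc _ _ _

end ShiftedSystem

theorem abs_one_sub_add_mul_le_one {K : Type*} [Field K] [LinearOrder K] [IsStrictOrderedRing K]
    {μ ω : K} (hμ : μ ≤ 1) (hω0 : 0 < ω) (hω2 : ω ≤ 2 / (1 + μ)) : |1 - ω| + ω * μ ≤ 1 := by
  have hμ' : 0 < 1 + μ := (div_pos_iff_of_pos_left two_pos).1 (hω0.trans_le hω2)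
  have hupper : ω * (1 + μ) ≤ 2 := (le_div_iff₀ hμ').1 hω2
  have hlower : ω * μ ≤ ω := mul_le_of_le_one_right hω0.le hμ
  rw [← le_sub_iff_add_le, abs_le]
  constructor <;> linarith

theorem stepAsyncSOR_error_contraction
    {ι : Type*} [Fintype ι] [Nonempty ι] [DecidableEq ι]
    (A : Matrix ι ι ℝ) (σ s ω : ℝ) (w b xbar x x' : ι → ℝ)
    (hA : ∀ i j, 0 ≤ A i j)
    (hw : ∀ i, 0 < w i)
    (hsuit : ∀ i, A.mulVec w i ≤ σ * w i)
    (hs : σ < s)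
    (μ r : ℝ)
    (hμ : μ = Finset.univ.sup' Finset.univ_nonempty (fun k => (σ - A k k) / (s - A k k)))
    (hr : r = |1 - ω| + ω * μ)
    (hω0 : 0 < ω) (hω2 : ω < 2 / (1 + μ))
    (hxbar : (s • (1 : Matrix ι ι ℝ) - A).mulVec xbar = b)
    (N : ι → Finset ι) (rnk : ι → ℕ)
    (hrank : ∀ i j, j ∈ N i → rnk j < rnk i)
    (hupd : ∀ i, x' i = (1 - ω) * x i + (ω / (s - A i i)) *
      (b i + ∑ j ∈ N i, A i j * x' j
           + ∑ j ∈ Finset.univ.filter (fun j => j ∉ N i ∧ j ≠ i), A i j * x j)) :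
    wNorm w (xbar - x') ≤ r * wNorm w (xbar - x) := by
  have hratio (k : ι) : (σ - A k k) / (s - A k k) ≤ μ :=
    hμ ▸ le_sup' (fun k => (σ - A k k) / (s - A k k)) (mem_univ k)
  have hμ1 : μ ≤ 1 := hμ ▸ sup'_le _ _ fun k _ => by
    have hk : A k k ≤ σ := diag_le_of_mulVec_le (fun j _ => hA k j) hw (hsuit k)
    exact div_le_one_of_le₀ (by linarith) (by linarith)
  have hdom : IsWeightedDiagDominant (s • (1 : Matrix ι ι ℝ) - A) w μ :=
    isWeightedDiagDominant_smul_one_sub (fun i j _ => hA i j) hw hsuit hs hratio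
  have hstep : IsStepAsyncSOR (s • (1 : Matrix ι ι ℝ) - A) b ω N x x' :=
    ⟨(measure rnk).wf.mono fun j i => hrank i j, fun i => (hupd i).trans
      (sorUpdate_smul_one_sub_piecewise A s ω b x x' fun hi => (hrank i i hi).false).symm⟩
  have hfactor : ‖1 - ω‖ + ‖ω‖ * μ = r := by
    rw [hr, Real.norm_eq_abs, Real.norm_of_nonneg hω0.le]
  have hr1 : r ≤ 1 := hr ▸ abs_one_sub_add_mul_le_one hμ1 hω0 hω2.le
  rw [← wNorm_norm w (xbar - x'), ← wNorm_norm w (xbar - x), ← hfactor]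
  exact stepAsyncSOR_error_contraction_general hdom hw (hfactor.trans_le hr1) hxbar hstep
end

section
/- Let ι be a nonempty finite index type, A : Matrix ι ι ℝ an entrywise nonnegative matrix, σ s : ℝ, and w : ι → ℝ a σ-suitable vector for A with s > σ. Let μ = max over k of (σ - A k k)/(s - A k k). If x̄ : ι → ℝ satisfies (s • 1 - A).mulVec x̄ = b, and x' is obtained from x : ι → ℝ by a step-asynchronous SOR update for the system (s • 1 - A) x = b with relaxation parameter ω = 1, then max_i |x̄ i - x' i| ≤ ((max_i w i)/(min_i w i)) · (μ/(1-μ)) · max_i |x' i - x i|. -/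
open Finset

/-!
Measure vectors by `‖v‖ = max i, |v i| / w i`. Subtracting the `i`-th SOR step from the `i`-th row
of the system expresses the new error `xbar i - x' i` through the increment `x' i - x i` and through
errors of the form `xbar j - x' j` or `xbar j - x j`, depending on whether `j` was already updated.
Both kinds are at most `(‖xbar - x'‖ + ‖x' - x‖) * w j`, so suitability yields
`‖xbar - x'‖ ≤ |ω⁻¹ - 1| * ‖x' - x‖ + μ * (‖xbar - x'‖ + ‖x' - x‖)`, where
`μ = max k, (σ - A k k) / (s - A k k)`. As `μ < 1`, this can be solved for `‖xbar - x'‖`, and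
comparing `‖·‖` with the unweighted norm costs the factor `max w / min w`.
-/

section WeightedSupNorm

variable {ι K : Type*} [Fintype ι] [Nonempty ι] [Field K] [LinearOrder K] [IsStrictOrderedRing K]
  {w : ι → K}

/-- The `w`-weighted supremum norm `max i, |v i| / w i`, in which the SOR error contracts.
It is meant for positive weights `w`. -/
def weightedSupNorm (w v : ι → K) : K :=
  univ.sup' univ_nonempty fun i => |v i| / w i

lemma weightedSupNorm_le_iff (hw : ∀ i, 0 < w i) {v : ι → K} {c : K} :
    weightedSupNorm w v ≤ c ↔ ∀ i, |v i| ≤ c * w i := by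
  simp only [weightedSupNorm, sup'_le_iff, mem_univ, true_implies, div_le_iff₀ (hw _)]

lemma abs_le_weightedSupNorm_mul (hw : ∀ i, 0 < w i) (v : ι → K) (i : ι) :
    |v i| ≤ weightedSupNorm w v * w i :=
  (weightedSupNorm_le_iff hw).1 le_rfl i

lemma weightedSupNorm_nonneg (hw : ∀ i, 0 < w i) (v : ι → K) : 0 ≤ weightedSupNorm w v :=
  have ⟨i⟩ := ‹Nonempty ι›
  nonneg_of_mul_nonneg_left ((abs_nonneg _).trans (abs_le_weightedSupNorm_mul hw v i)) (hw i)

lemma sup'_abs_le_weightedSupNorm_mul_sup' (hw : ∀ i, 0 < w i) (v : ι → K) :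
    univ.sup' univ_nonempty (fun i => |v i|) ≤
      weightedSupNorm w v * univ.sup' univ_nonempty w :=
  sup'_le _ _ fun i hi => (abs_le_weightedSupNorm_mul hw v i).trans <|
    mul_le_mul_of_nonneg_left (le_sup' w hi) (weightedSupNorm_nonneg hw v)

lemma weightedSupNorm_le_sup'_abs_div_inf' (hw : ∀ i, 0 < w i) (v : ι → K) :
    weightedSupNorm w v ≤
      univ.sup' univ_nonempty (fun i => |v i|) / univ.inf' univ_nonempty w := by
  have inf_pos : 0 < univ.inf' univ_nonempty w := (lt_inf'_iff _).2 fun i _ => hw i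
  refine sup'_le _ _ fun i hi => ?_
  have abs_le_sup := le_sup' (fun i => |v i|) hi
  exact div_le_div₀ ((abs_nonneg _).trans abs_le_sup) abs_le_sup inf_pos (inf'_le w hi)

lemma abs_sub_piecewise_le [DecidableEq ι] (hw : ∀ i, 0 < w i) (t : Finset ι) (z y x : ι → K)
    (j : ι) :
    |z j - t.piecewise y x j| ≤ (weightedSupNorm w (z - y) + weightedSupNorm w (y - x)) * w j := by
  have new_error : |z j - y j| ≤ weightedSupNorm w (z - y) * w j :=
    abs_le_weightedSupNorm_mul hw (z - y) j
  have increment : |y j - x j| ≤ weightedSupNorm w (y - x) * w j :=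
    abs_le_weightedSupNorm_mul hw (y - x) j
  rw [add_mul]
  by_cases hj : j ∈ t
  · rw [piecewise_eq_of_mem _ _ _ hj]
    linarith [abs_nonneg (y j - x j)]
  · rw [piecewise_eq_of_notMem _ _ _ hj]
    linarith [abs_sub_le (z j) (y j) (x j)]

end WeightedSupNorm

section Suitable

variable {ι K : Type*} [Fintype ι] [DecidableEq ι] [Field K] [LinearOrder K]

/-- `w` is a positive vector that is `σ`-suitable for `A`. The off-diagonal entries enter through
their absolute values, so that the notion makes sense for signed matrices; it is `A w ≤ σ w` when
those entries are nonnegative. -/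
structure IsSuitable (A : Matrix ι ι K) (σ : K) (w : ι → K) : Prop where
  pos : ∀ i, 0 < w i
  sum_le : ∀ i, A i i * w i + ∑ j ∈ univ.erase i, |A i j| * w j ≤ σ * w i

/-- The factor `max k, (σ - A k k) / (s - A k k)` by which a Gauss–Seidel step for `s • 1 - A`
contracts the error in the norm weighted by a `σ`-suitable vector. -/
def contractionFactor [Nonempty ι] (A : Matrix ι ι K) (σ s : K) : K :=
  univ.sup' univ_nonempty fun k => (σ - A k k) / (s - A k k)

variable [IsStrictOrderedRing K] {A : Matrix ι ι K} {σ s : K} {w : ι → K}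

lemma isSuitable_of_mulVec_le (hA : ∀ i j, i ≠ j → 0 ≤ A i j) (hw : ∀ i, 0 < w i)
    (h : ∀ i, A.mulVec w i ≤ σ * w i) : IsSuitable A σ w where
  pos := hw
  sum_le i := by
    have abs_eq : ∀ j ∈ univ.erase i, |A i j| * w j = A i j * w j := fun j hj => by
      rw [abs_of_nonneg (hA i j (ne_of_mem_erase hj).symm)]
    rw [sum_congr rfl abs_eq, add_sum_erase _ (fun j => A i j * w j) (mem_univ i)]
    exact h i

namespace IsSuitable

lemma abs_sum_erase_le (h : IsSuitable A σ w) {v : ι → K} {c : K}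
    (hv : ∀ j, |v j| ≤ c * w j) (i : ι) :
    |∑ j ∈ univ.erase i, A i j * v j| ≤ c * ((σ - A i i) * w i) := by
  have hc : 0 ≤ c := nonneg_of_mul_nonneg_left ((abs_nonneg _).trans (hv i)) (h.pos i)
  calc |∑ j ∈ univ.erase i, A i j * v j|
      ≤ ∑ j ∈ univ.erase i, |A i j * v j| := abs_sum_le_sum_abs _ _
    _ ≤ ∑ j ∈ univ.erase i, c * (|A i j| * w j) := sum_le_sum fun j _ => by
        rw [abs_mul, mul_left_comm]
        exact mul_le_mul_of_nonneg_left (hv j) (abs_nonneg _)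
    _ = c * ∑ j ∈ univ.erase i, |A i j| * w j := (mul_sum _ _ _).symm
    _ ≤ c * ((σ - A i i) * w i) :=
        mul_le_mul_of_nonneg_left (by linarith [h.sum_le i]) hc

lemma diag_le (h : IsSuitable A σ w) (i : ι) : A i i ≤ σ := by
  have off_diag_nonneg : 0 ≤ ∑ j ∈ univ.erase i, |A i j| * w j :=
    sum_nonneg fun j _ => mul_nonneg (abs_nonneg _) (h.pos j).le
  exact le_of_mul_le_mul_right (by linarith [h.sum_le i]) (h.pos i)

lemma sub_diag_pos (h : IsSuitable A σ w) (hs : σ < s) (i : ι) : 0 < s - A i i :=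
  sub_pos.2 ((h.diag_le i).trans_lt hs)

variable [Nonempty ι]

lemma sub_diag_le (h : IsSuitable A σ w) (hs : σ < s) (i : ι) :
    σ - A i i ≤ contractionFactor A σ s * (s - A i i) :=
  (div_le_iff₀ (h.sub_diag_pos hs i)).1 <|
    le_sup' (fun k => (σ - A k k) / (s - A k k)) (mem_univ i)

lemma contractionFactor_nonneg (h : IsSuitable A σ w) (hs : σ < s) :
    0 ≤ contractionFactor A σ s :=
  have ⟨i⟩ := ‹Nonempty ι›
  nonneg_of_mul_nonneg_left ((sub_nonneg.2 (h.diag_le i)).trans (h.sub_diag_le hs i))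
    (h.sub_diag_pos hs i)

lemma contractionFactor_lt_one (h : IsSuitable A σ w) (hs : σ < s) :
    contractionFactor A σ s < 1 :=
  (sup'_lt_iff _).2 fun i _ => (div_lt_one (h.sub_diag_pos hs i)).2 (sub_lt_sub_right hs _)

end IsSuitable

end Suitable

lemma smul_one_sub_mulVec_apply {ι R : Type*} [Fintype ι] [DecidableEq ι] [CommRing R]
    (A : Matrix ι ι R) (s : R) (v : ι → R) (i : ι) :
    (s • (1 : Matrix ι ι R) - A).mulVec v i =
      (s - A i i) * v i - ∑ j ∈ univ.erase i, A i j * v j := by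
  have split_row : A.mulVec v i = A i i * v i + ∑ j ∈ univ.erase i, A i j * v j :=
    (add_sum_erase _ (fun j => A i j * v j) (mem_univ i)).symm
  rw [Matrix.sub_mulVec, Matrix.smul_mulVec, Matrix.one_mulVec, Pi.sub_apply, Pi.smul_apply,
    smul_eq_mul, split_row]
  ring

lemma sum_add_sum_filter_notMem_eq_sum_erase {ι M : Type*} [Fintype ι] [DecidableEq ι]
    [AddCommMonoid M] {t : Finset ι} {i : ι} (hi : i ∉ t) (f g : ι → M) :
    ∑ j ∈ t, f j + ∑ j ∈ univ.filter (fun j => j ∉ t ∧ j ≠ i), g j =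
      ∑ j ∈ univ.erase i, t.piecewise f g j := by
  have old_eq : univ.filter (fun j => j ∉ t ∧ j ≠ i) = univ.erase i \ t := by
    ext j
    simp only [mem_filter, mem_sdiff, mem_erase, mem_univ, true_and, and_comm]
  rw [sum_piecewise, inter_eq_right.2 (subset_erase.2 ⟨subset_univ t, hi⟩), old_eq]

/-- `x'` arises from `x` by a step-asynchronous SOR update with relaxation parameter `ω` for the
system `(s • 1 - A) x = b`, where `N i` is the set of components already updated when `x' i` is
computed. The order of computation is encoded by `N` alone, subject to `i ∉ N i`. -/
structure IsStepAsyncSORUpdate {ι K : Type*} [Fintype ι] [DecidableEq ι] [Field K]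
    (A : Matrix ι ι K) (s ω : K) (b x x' : ι → K) (N : ι → Finset ι) : Prop where
  notMem : ∀ i, i ∉ N i
  eq_step : ∀ i, x' i = (1 - ω) * x i + (ω / (s - A i i)) *
    (b i + ∑ j ∈ N i, A i j * x' j
         + ∑ j ∈ univ.filter (fun j => j ∉ N i ∧ j ≠ i), A i j * x j)

namespace IsStepAsyncSORUpdate

variable {ι K : Type*} [Fintype ι] [DecidableEq ι] [Field K] {A : Matrix ι ι K} {s ω : K}
  {b x x' xbar : ι → K} {N : ι → Finset ι}

lemma sub_diag_mul_eq (h : IsStepAsyncSORUpdate A s ω b x x' N) (hω : ω ≠ 0) {i : ι}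
    (hi : s - A i i ≠ 0) :
    (s - A i i) * x' i = b i + ∑ j ∈ univ.erase i, A i j * (N i).piecewise x' x j
      - (s - A i i) * ((ω⁻¹ - 1) * (x' i - x i)) := by
  have mixed_sum : ∑ j ∈ N i, A i j * x' j
      + ∑ j ∈ univ.filter (fun j => j ∉ N i ∧ j ≠ i), A i j * x j
      = ∑ j ∈ univ.erase i, A i j * (N i).piecewise x' x j := by
    rw [sum_add_sum_filter_notMem_eq_sum_erase (h.notMem i)]
    simp only [piecewise, mul_ite]
  have step := h.eq_step i
  rw [add_assoc, mixed_sum] at step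
  generalize ∑ j ∈ univ.erase i, A i j * (N i).piecewise x' x j = S at step ⊢
  field_simp at step ⊢
  linear_combination step

lemma sub_diag_mul_error_eq (h : IsStepAsyncSORUpdate A s ω b x x' N) (hω : ω ≠ 0)
    (hxbar : (s • (1 : Matrix ι ι K) - A).mulVec xbar = b) {i : ι} (hi : s - A i i ≠ 0) :
    (s - A i i) * (xbar i - x' i) = (s - A i i) * ((ω⁻¹ - 1) * (x' i - x i))
      + ∑ j ∈ univ.erase i, A i j * (xbar j - (N i).piecewise x' x j) := by
  have exact_row := (smul_one_sub_mulVec_apply A s xbar i).symm.trans (congrFun hxbar i)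
  simp only [mul_sub (A i _), sum_sub_distrib]
  linear_combination exact_row - h.sub_diag_mul_eq hω hi

variable [Nonempty ι] [LinearOrder K] [IsStrictOrderedRing K] {σ : K} {w : ι → K}

lemma weightedSupNorm_error_le_add (h : IsStepAsyncSORUpdate A s ω b x x' N) (hω : ω ≠ 0)
    (hw : IsSuitable A σ w) (hs : σ < s)
    (hxbar : (s • (1 : Matrix ι ι K) - A).mulVec xbar = b) :
    weightedSupNorm w (xbar - x') ≤ |ω⁻¹ - 1| * weightedSupNorm w (x' - x)
      + contractionFactor A σ s *
        (weightedSupNorm w (xbar - x') + weightedSupNorm w (x' - x)) := by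
  set E := weightedSupNorm w (xbar - x')
  set D := weightedSupNorm w (x' - x)
  set μ := contractionFactor A σ s
  have hED : 0 ≤ E + D :=
    add_nonneg (weightedSupNorm_nonneg hw.pos _) (weightedSupNorm_nonneg hw.pos _)
  refine (weightedSupNorm_le_iff hw.pos).2 fun i => ?_
  have hd := hw.sub_diag_pos hs i
  have relaxation_le : |(ω⁻¹ - 1) * (x' i - x i)| ≤ |ω⁻¹ - 1| * (D * w i) := by
    rw [abs_mul]
    exact mul_le_mul_of_nonneg_left (abs_le_weightedSupNorm_mul hw.pos (x' - x) i) (abs_nonneg _)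
  have coupling_le : |∑ j ∈ univ.erase i, A i j * (xbar j - (N i).piecewise x' x j)| ≤
      (E + D) * (μ * (s - A i i) * w i) :=
    (hw.abs_sum_erase_le (abs_sub_piecewise_le hw.pos (N i) xbar x' x) i).trans <|
      mul_le_mul_of_nonneg_left
        (mul_le_mul_of_nonneg_right (hw.sub_diag_le hs i) (hw.pos i).le) hED
  refine le_of_mul_le_mul_left ?_ hd
  calc (s - A i i) * |xbar i - x' i|
      = |(s - A i i) * ((ω⁻¹ - 1) * (x' i - x i))
          + ∑ j ∈ univ.erase i, A i j * (xbar j - (N i).piecewise x' x j)| := by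
        rw [← h.sub_diag_mul_error_eq hω hxbar hd.ne', abs_mul, abs_of_pos hd]
    _ ≤ (s - A i i) * |(ω⁻¹ - 1) * (x' i - x i)|
          + |∑ j ∈ univ.erase i, A i j * (xbar j - (N i).piecewise x' x j)| := by
        refine (abs_add_le _ _).trans_eq ?_
        rw [abs_mul (s - A i i), abs_of_pos hd]
    _ ≤ (s - A i i) * (|ω⁻¹ - 1| * (D * w i)) + (E + D) * (μ * (s - A i i) * w i) :=
        add_le_add (mul_le_mul_of_nonneg_left relaxation_le hd.le) coupling_le
    _ = (s - A i i) * ((|ω⁻¹ - 1| * D + μ * (E + D)) * w i) := by ring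

lemma weightedSupNorm_error_le (h : IsStepAsyncSORUpdate A s ω b x x' N) (hω : ω ≠ 0)
    (hw : IsSuitable A σ w) (hs : σ < s)
    (hxbar : (s • (1 : Matrix ι ι K) - A).mulVec xbar = b) :
    weightedSupNorm w (xbar - x') ≤
      (contractionFactor A σ s + |ω⁻¹ - 1|) / (1 - contractionFactor A σ s) *
        weightedSupNorm w (x' - x) := by
  rw [div_mul_eq_mul_div, le_div_iff₀ (sub_pos.2 (hw.contractionFactor_lt_one hs))]
  linarith [h.weightedSupNorm_error_le_add hω hw hs hxbar]

end IsStepAsyncSORUpdate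

theorem stepAsyncGaussSeidel_sup_norm_bound_general
    {ι K : Type*} [Fintype ι] [Nonempty ι] [DecidableEq ι]
    [Field K] [LinearOrder K] [IsStrictOrderedRing K]
    {A : Matrix ι ι K} {σ s ω : K} {w b xbar x x' : ι → K} {N : ι → Finset ι}
    (hw : IsSuitable A σ w) (hs : σ < s) (hω : ω ≠ 0)
    (hxbar : (s • (1 : Matrix ι ι K) - A).mulVec xbar = b)
    (hupd : IsStepAsyncSORUpdate A s ω b x x' N) :
    univ.sup' univ_nonempty (fun i => |xbar i - x' i|) ≤
      (univ.sup' univ_nonempty w / univ.inf' univ_nonempty w) *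
        ((contractionFactor A σ s + |ω⁻¹ - 1|) / (1 - contractionFactor A σ s)) *
        univ.sup' univ_nonempty (fun i => |x' i - x i|) := by
  set μ := contractionFactor A σ s
  have factor_nonneg : 0 ≤ (μ + |ω⁻¹ - 1|) / (1 - μ) :=
    div_nonneg (add_nonneg (hw.contractionFactor_nonneg hs) (abs_nonneg _))
      (sub_nonneg.2 (hw.contractionFactor_lt_one hs).le)
  have sup_nonneg : 0 ≤ univ.sup' univ_nonempty w :=
    have ⟨i⟩ := ‹Nonempty ι›
    (hw.pos i).le.trans (le_sup' w (mem_univ i))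
  calc univ.sup' univ_nonempty (fun i => |xbar i - x' i|)
      ≤ weightedSupNorm w (xbar - x') * univ.sup' univ_nonempty w :=
        sup'_abs_le_weightedSupNorm_mul_sup' hw.pos (xbar - x')
    _ ≤ (μ + |ω⁻¹ - 1|) / (1 - μ) * weightedSupNorm w (x' - x) * univ.sup' univ_nonempty w :=
        mul_le_mul_of_nonneg_right (hupd.weightedSupNorm_error_le hω hw hs hxbar) sup_nonneg
    _ ≤ (μ + |ω⁻¹ - 1|) / (1 - μ) * (univ.sup' univ_nonempty (fun i => |x' i - x i|) /
          univ.inf' univ_nonempty w) * univ.sup' univ_nonempty w :=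
        mul_le_mul_of_nonneg_right (mul_le_mul_of_nonneg_left
          (weightedSupNorm_le_sup'_abs_div_inf' hw.pos (x' - x)) factor_nonneg) sup_nonneg
    _ = _ := by ring

theorem stepAsyncGaussSeidel_sup_norm_bound
    {ι : Type*} [Fintype ι] [Nonempty ι] [DecidableEq ι]
    (A : Matrix ι ι ℝ) (σ s : ℝ) (w b xbar x x' : ι → ℝ)
    (hA : ∀ i j, 0 ≤ A i j)
    (hw : ∀ i, 0 < w i)
    (hsuit : ∀ i, A.mulVec w i ≤ σ * w i)
    (hs : σ < s)
    (μ : ℝ)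
    (hμ : μ = Finset.univ.sup' Finset.univ_nonempty (fun k => (σ - A k k) / (s - A k k)))
    (hxbar : (s • (1 : Matrix ι ι ℝ) - A).mulVec xbar = b)
    (N : ι → Finset ι) (rnk : ι → ℕ)
    (hrank : ∀ i j, j ∈ N i → rnk j < rnk i)
    (hupd : ∀ i, x' i = (1 - (1 : ℝ)) * x i + ((1 : ℝ) / (s - A i i)) *
      (b i + ∑ j ∈ N i, A i j * x' j
           + ∑ j ∈ Finset.univ.filter (fun j => j ∉ N i ∧ j ≠ i), A i j * x j)) :
    Finset.univ.sup' Finset.univ_nonempty (fun i => |xbar i - x' i|) ≤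
      ((Finset.univ.sup' Finset.univ_nonempty w) / (Finset.univ.inf' Finset.univ_nonempty w)) *
        (μ / (1 - μ)) *
        Finset.univ.sup' Finset.univ_nonempty (fun i => |x' i - x i|) := by
  simpa [hμ, contractionFactor] using stepAsyncGaussSeidel_sup_norm_bound_general
    (isSuitable_of_mulVec_le (fun i j _ => hA i j) hw hsuit) hs one_ne_zero hxbar
    ⟨fun i hi => (hrank i i hi).false, hupd⟩
end

section
/- Let ι be a nonempty finite index type, A : Matrix ι ι ℝ an entrywise nonnegative matrix, and σ : ℝ with σ > ρ(A). Then the series w_σ := Σ_{i=0}^∞ σ^{-i} · (A^i).mulVec 𝟙 (where 𝟙 is the all-ones vector) converges, and its sum satisfies (A.mulVec w_σ) i < σ * w_σ i for every i; in particular w_σ i > 0 for every i, so w_σ is σ-suitable for A. -/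
open Finset

/-- Spectral radius of a real matrix: the maximum of the absolute values of
its complex eigenvalues. -/
noncomputable def specRad {ι : Type*} [Fintype ι] [DecidableEq ι] (A : Matrix ι ι ℝ) : ℝ :=
  sSup ((fun z : ℂ => ‖z‖) '' spectrum ℂ (A.map (algebraMap ℝ ℂ)))

/-! The resolvent `z ↦ (1 - z • a)⁻¹` of an element `a` of a complex Banach algebra is holomorphic
on the disc of radius `(spectralRadius ℂ a)⁻¹`, so its Taylor expansion, the geometric series in
`z • a`, converges on that whole disc. For `M = σ⁻¹ • A` with `specRad A < σ`, the series
`S = ∑ Mᵏ` therefore converges, and `(1 - M) S = 1` gives `A (S v) = σ (S v - v)` for every `v`.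
When `A ≥ 0` and `v > 0`, the zeroth term of `S v = ∑ Mᵏ v` shows that `S v ≥ v > 0`. -/

open scoped Ring

section BanachAlgebra

variable {𝔸 : Type*} [NormedRing 𝔸] [NormedAlgebra ℂ 𝔸] [CompleteSpace 𝔸]

theorem hasSum_smul_pow_of_lt_inv_spectralRadius {a : 𝔸} {z : ℂ}
    (hz : ‖z‖ₑ < (spectralRadius ℂ a)⁻¹) :
    HasSum (fun k : ℕ => (z • a) ^ k) (1 - z • a)⁻¹ʳ := by
  obtain ⟨r, hzr, hr⟩ := ENNReal.lt_iff_exists_nnreal_btwn.1 hz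
  have hr_pos : 0 < r := ENNReal.coe_pos.1 (bot_le.trans_lt hzr)
  have taylor_on_ball :=
    (spectrum.differentiableOn_inverse_one_sub_smul hr).hasFPowerSeriesOnBall hr_pos
  have geometric_on_ball :=
    (spectrum.hasFPowerSeriesOnBall_inverse_one_sub_smul ℂ a).exchange_radius taylor_on_ball
  have hz_mem : z ∈ Metric.eball (0 : ℂ) r := mem_eball_zero_iff.2 hzr
  simpa [smul_pow] using geometric_on_ball.hasSum hz_mem

end BanachAlgebra

theorem hasSum_mulVec_left {κ m n R : Type*} [Fintype n] [NonUnitalNonAssocSemiring R]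
    [TopologicalSpace R] [ContinuousAdd R] [ContinuousMul R] {f : κ → Matrix m n R}
    {S : Matrix m n R} (hf : HasSum f S) (v : n → R) :
    HasSum (fun k => (f k).mulVec v) (S.mulVec v) :=
  hf.map (Matrix.mulVec.addMonoidHomLeft v) (continuous_id.matrix_mulVec continuous_const)

theorem summable_matrix_map_algebraMap_iff {κ m n 𝕜 : Type*} [RCLike 𝕜] {f : κ → Matrix m n ℝ} :
    Summable (fun k => (f k).map (algebraMap ℝ 𝕜)) ↔ Summable f := by
  refine Pi.summable.trans (Iff.trans ?_ Pi.summable.symm)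
  refine forall_congr' fun i => Pi.summable.trans (Iff.trans ?_ Pi.summable.symm)
  exact forall_congr' fun j => RCLike.summable_ofReal 𝕜

section GeometricSeries

variable {ι R : Type*} [Fintype ι] [DecidableEq ι] [TopologicalSpace R] {M : Matrix ι ι R}

theorem mulVec_tsum_pow_mulVec [Ring R] [IsTopologicalRing R] [T2Space R]
    (hM : Summable (M ^ ·)) (v : ι → R) :
    M.mulVec ((∑' k, M ^ k).mulVec v) = (∑' k, M ^ k).mulVec v - v := by
  set w := (∑' k, M ^ k).mulVec v with hw
  calc M.mulVec w = w - (1 - M).mulVec w := by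
        rw [Matrix.sub_mulVec, Matrix.one_mulVec, sub_sub_cancel]
    _ = w - v := by
        rw [hw, Matrix.mulVec_mulVec, hM.one_sub_mul_tsum_pow, Matrix.one_mulVec]

theorem le_of_hasSum_pow_mulVec [Semiring R] [PartialOrder R] [IsOrderedRing R]
    [OrderClosedTopology R] (hM : ∀ i j, 0 ≤ M i j) {v w : ι → R} (hv : 0 ≤ v)
    (hw : HasSum (fun k : ℕ => (M ^ k).mulVec v) w) : v ≤ w := by
  have hnonneg (k : ℕ) : 0 ≤ (M ^ k).mulVec v := fun i =>
    sum_nonneg fun j _ => mul_nonneg (Matrix.pow_apply_nonneg hM k i j) (hv j)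
  simpa only [pow_zero, Matrix.one_mulVec] using le_hasSum hw 0 fun k _ => hnonneg k

end GeometricSeries

section SpectralRadius

variable {ι : Type*} [Fintype ι] [DecidableEq ι] {A : Matrix ι ι ℝ} {σ : ℝ}

theorem specRad_nonneg (A : Matrix ι ι ℝ) : 0 ≤ specRad A :=
  Real.sSup_nonneg (Set.forall_mem_image.2 fun z _ => norm_nonneg z)

theorem norm_le_specRad {z : ℂ} (hz : z ∈ spectrum ℂ (A.map (algebraMap ℝ ℂ))) :
    ‖z‖ ≤ specRad A :=
  le_csSup ((Matrix.finite_spectrum _).image _).bddAbove (Set.mem_image_of_mem _ hz)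

theorem spectralRadius_map_le_ofReal_specRad (A : Matrix ι ι ℝ) :
    spectralRadius ℂ (A.map (algebraMap ℝ ℂ)) ≤ ENNReal.ofReal (specRad A) :=
  iSup₂_le fun z hz => by
    simpa only [ofReal_norm] using! ENNReal.ofReal_le_ofReal (norm_le_specRad hz)

open scoped Matrix.Norms.Operator in
theorem summable_inv_smul_pow_of_specRad_lt (hσ : specRad A < σ) :
    Summable fun k : ℕ => (σ⁻¹ • A) ^ k := by
  have hσ_pos : 0 < σ := (specRad_nonneg A).trans_lt hσ
  have hlt : ‖algebraMap ℝ ℂ σ⁻¹‖ₑ < (spectralRadius ℂ (A.map (algebraMap ℝ ℂ)))⁻¹ := by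
    rw [← ofReal_norm, norm_algebraMap', Real.norm_of_nonneg (inv_nonneg.2 hσ_pos.le),
      ENNReal.ofReal_inv_of_pos hσ_pos, ENNReal.inv_lt_inv]
    exact (spectralRadius_map_le_ofReal_specRad A).trans_lt
      ((ENNReal.ofReal_lt_ofReal_iff hσ_pos).2 hσ)
  have hmap (k : ℕ) : ((σ⁻¹ • A) ^ k).map (algebraMap ℝ ℂ) =
      (algebraMap ℝ ℂ σ⁻¹ • A.map (algebraMap ℝ ℂ)) ^ k := by
    rw [Matrix.map_pow, Matrix.map_smul' _ _ _ (map_mul _)]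
  rw [← summable_matrix_map_algebraMap_iff (𝕜 := ℂ)]
  simpa only [hmap] using! (hasSum_smul_pow_of_lt_inv_spectralRadius hlt).summable

theorem suitable_vector_series_general (hA : ∀ i j, 0 ≤ A i j) (hσ : specRad A < σ)
    {v : ι → ℝ} (hv : ∀ i, 0 < v i) :
    ∃ w : ι → ℝ,
      HasSum (fun k : ℕ => (σ ^ k)⁻¹ • (A ^ k).mulVec v) w ∧
      (∀ i, A.mulVec w i < σ * w i) ∧
      (∀ i, 0 < w i) := by
  have hσ_pos : 0 < σ := (specRad_nonneg A).trans_lt hσ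
  have hM := summable_inv_smul_pow_of_specRad_lt hσ
  have hM_nonneg (i j : ι) : 0 ≤ (σ⁻¹ • A) i j := mul_nonneg (inv_nonneg.2 hσ_pos.le) (hA i j)
  have hsum := hasSum_mulVec_left hM.hasSum v
  have hfix := mulVec_tsum_pow_mulVec hM v
  have hv_le := le_of_hasSum_pow_mulVec hM_nonneg (fun i => (hv i).le) hsum
  set w := (∑' k, (σ⁻¹ • A) ^ k).mulVec v
  refine ⟨w, ?_, fun i => ?_, fun i => (hv i).trans_le (hv_le i)⟩
  · simpa only [smul_pow, inv_pow, Matrix.smul_mulVec] using hsum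
  · have hfix_i : σ⁻¹ * A.mulVec w i = w i - v i := by
      simpa only [Matrix.smul_mulVec] using! congrFun hfix i
    rw [← inv_mul_lt_iff₀ hσ_pos, hfix_i]
    exact sub_lt_self _ (hv i)

end SpectralRadius

theorem suitable_vector_series
    {ι : Type*} [Fintype ι] [Nonempty ι] [DecidableEq ι]
    (A : Matrix ι ι ℝ) (σ : ℝ)
    (hA : ∀ i j, 0 ≤ A i j)
    (hσ : specRad A < σ) :
    ∃ wσ : ι → ℝ,
      HasSum (fun k : ℕ => (σ ^ k)⁻¹ • (A ^ k).mulVec (fun _ => (1 : ℝ))) wσ ∧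
      (∀ i, A.mulVec wσ i < σ * wσ i) ∧
      (∀ i, 0 < wσ i) :=
  suitable_vector_series_general hA hσ fun _ => one_pos
end

section
/- Let ι be a nonempty finite index type, A : Matrix ι ι ℝ an entrywise nonnegative matrix, γ : ℝ, and w : ι → ℝ with w i > 0 for all i and (A.mulVec w) i ≤ γ * w i for all i. Then ρ(A) ≤ γ. -/
/-!
Measure an eigenvector `v` by the weighted maximum norm `c = max j, ‖v j‖ / w j`. The eigenvalue
equation at an index where this maximum is attained gives `‖z‖ * (c * w i) ≤ γ * (c * w i)`, and
`c > 0` can be cancelled.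
-/

open Matrix

theorem exists_pos_norm_le_mul_and_norm_eq_mul {ι E : Type*} [Finite ι] [NormedAddGroup E]
    {v : ι → E} {w : ι → ℝ} (hv : v ≠ 0) (hw : ∀ i, 0 < w i) :
    ∃ c > 0, (∀ j, ‖v j‖ ≤ c * w j) ∧ ∃ i, ‖v i‖ = c * w i := by
  obtain ⟨k, hk⟩ := Function.ne_iff.1 hv
  have : Nonempty ι := ⟨k⟩
  obtain ⟨i, hi⟩ := Finite.exists_max fun j => ‖v j‖ / w j
  exact ⟨‖v i‖ / w i, (div_pos (norm_pos_iff.2 hk) (hw k)).trans_le (hi k),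
    fun j => (div_le_iff₀ (hw j)).1 (hi j), i, (div_mul_cancel₀ _ (hw i).ne').symm⟩

theorem norm_mulVec_apply_le {m n R : Type*} [Fintype n] [NonUnitalSeminormedRing R]
    (A : Matrix m n R) {v : n → R} {u : n → ℝ} (hvu : ∀ j, ‖v j‖ ≤ u j) (i : m) :
    ‖(A *ᵥ v) i‖ ≤ (A.map (‖·‖) *ᵥ u) i :=
  norm_sum_le_of_le _ fun j _ =>
    (norm_mul_le _ _).trans (mul_le_mul_of_nonneg_left (hvu j) (norm_nonneg _))

theorem norm_le_of_mulVec_eq_smul {ι R : Type*} [Fintype ι] [NonUnitalNormedRing R]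
    [NormMulClass R] {A : Matrix ι ι R} {v : ι → R} {z : R} {γ : ℝ} {w : ι → ℝ}
    (hw : ∀ i, 0 < w i) (hA : ∀ i, (A.map (‖·‖) *ᵥ w) i ≤ γ * w i)
    (hv : v ≠ 0) (hz : A *ᵥ v = z • v) : ‖z‖ ≤ γ := by
  obtain ⟨c, hc, hvw, i, hi⟩ := exists_pos_norm_le_mul_and_norm_eq_mul hv hw
  refine le_of_mul_le_mul_right ?_ (mul_pos hc (hw i))
  calc ‖z‖ * (c * w i) = ‖(A *ᵥ v) i‖ := by
        rw [hz, Pi.smul_apply, smul_eq_mul, norm_mul, hi]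
    _ ≤ (A.map (‖·‖) *ᵥ (c • w)) i := norm_mulVec_apply_le A hvw i
    _ = c * (A.map (‖·‖) *ᵥ w) i := by rw [mulVec_smul, Pi.smul_apply, smul_eq_mul]
    _ ≤ c * (γ * w i) := mul_le_mul_of_nonneg_left (hA i) hc.le
    _ = γ * (c * w i) := mul_left_comm c γ (w i)

theorem norm_le_of_mem_spectrum_of_mulVec_le {ι K : Type*} [Fintype ι] [DecidableEq ι]
    [NormedField K] {A : Matrix ι ι K} {z : K} {γ : ℝ} {w : ι → ℝ} (hw : ∀ i, 0 < w i)
    (hA : ∀ i, (A.map (‖·‖) *ᵥ w) i ≤ γ * w i) (hz : z ∈ spectrum K A) : ‖z‖ ≤ γ := by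
  rw [← spectrum_toLin', ← Module.End.hasEigenvalue_iff_mem_spectrum] at hz
  obtain ⟨v, hv⟩ := hz.exists_hasEigenvector
  exact norm_le_of_mulVec_eq_smul hw hA hv.2 hv.apply_eq_smul

theorem specRad_le_of_mulVec_le_general {ι : Type*} [Fintype ι] [Nonempty ι] [DecidableEq ι]
    (A : Matrix ι ι ℝ) (γ : ℝ) (w : ι → ℝ) (hw : ∀ i, 0 < w i)
    (h : ∀ i, (A.map abs *ᵥ w) i ≤ γ * w i) : specRad A ≤ γ := by
  have norm_map : (A.map (algebraMap ℝ ℂ)).map (‖·‖) = A.map abs := by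
    ext i j
    exact Complex.norm_real (A i j)
  refine csSup_le ((spectrum.nonempty_of_isAlgClosed_of_finiteDimensional ℂ _).image _) ?_
  rintro _ ⟨z, hz, rfl⟩
  exact norm_le_of_mem_spectrum_of_mulVec_le hw (norm_map ▸ h) hz

/-- Collatz's upper bound, without any irreducibility assumption. -/
theorem specRad_le_of_mulVec_le
    {ι : Type*} [Fintype ι] [Nonempty ι] [DecidableEq ι]
    (A : Matrix ι ι ℝ) (γ : ℝ) (w : ι → ℝ)
    (hA : ∀ i j, 0 ≤ A i j)
    (hw : ∀ i, 0 < w i)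
    (h : ∀ i, A.mulVec w i ≤ γ * w i) :
    specRad A ≤ γ := by
  have map_abs : A.map abs = A := by
    ext i j
    exact abs_of_nonneg (hA i j)
  exact specRad_le_of_mulVec_le_general A γ w hw (map_abs.symm ▸ h)
end

section
/- Let ι be a nonempty finite index type, P : Matrix ι ι ℝ an entrywise nonnegative matrix whose rows sum to 1 (∀ i, Σ_j P i j = 1), α : ℝ with 0 < α < 1, and v : ι → ℝ. Let x̄ : ι → ℝ satisfy ((1 : Matrix ι ι ℝ) - α • Pᵀ).mulVec x̄ = (1 - α) • v. If x' is obtained from x : ι → ℝ by a step-asynchronous SOR update for the system (1 • 1 - α • Pᵀ) y = (1-α) • v with relaxation parameter ω = 1 (i.e., with s = 1, coefficient matrix A = α • Pᵀ, and right-hand side b = (1-α) • v), then Σ_i |x̄ i - x' i| ≤ (α/(1-α)) · Σ_i |x' i - x i|. -/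
open Finset Matrix

/-!
The residual of an update is a matrix applied to the step `x' - x`: away from the diagonal only the
entries of `A` that met a stale coordinate survive, and relaxation contributes only on the
diagonal. So the `ℓ₁` operator norm of that matrix is controlled by the one of `A`, while
`s • 1 - A` expands `ℓ₁` norms by at least `‖s‖ - ‖A‖₁`. As `s • 1 - A` maps the error to the
residual, comparing the two estimates bounds the error by the step.
-/

section ColumnSums

variable {m n : Type*}

theorem norm_apply_le_of_sum_norm_le [Fintype m] {E : Type*} [SeminormedAddGroup E]
    {A : Matrix m n E} {c : ℝ} (hA : ∀ j, ∑ i, ‖A i j‖ ≤ c) (i : m) (j : n) : ‖A i j‖ ≤ c :=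
  (single_le_sum (f := fun k => ‖A k j‖) (fun _ _ => norm_nonneg _) (mem_univ i)).trans (hA j)

variable [Fintype n]

theorem sum_norm_mulVec_le [Fintype m] {R : Type*} [NonUnitalSeminormedRing R]
    {A : Matrix m n R} {c : ℝ} (hA : ∀ j, ∑ i, ‖A i j‖ ≤ c) (y : n → R) :
    ∑ i, ‖(A *ᵥ y) i‖ ≤ c * ∑ j, ‖y j‖ :=
  calc
    ∑ i, ‖(A *ᵥ y) i‖ ≤ ∑ i, ∑ j, ‖A i j‖ * ‖y j‖ :=
      sum_le_sum fun _ _ => norm_sum_le_of_le _ fun _ _ => norm_mul_le _ _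
    _ = ∑ j, (∑ i, ‖A i j‖) * ‖y j‖ := by
      rw [sum_comm]
      simp only [sum_mul]
    _ ≤ ∑ j, c * ‖y j‖ := by
      gcongr with j
      exact hA j
    _ = c * ∑ j, ‖y j‖ := (mul_sum _ _ _).symm

theorem sub_mul_sum_norm_le_sum_norm_smul_one_sub_mulVec [DecidableEq n]
    {𝕜 : Type*} [NormedField 𝕜] {A : Matrix n n 𝕜} {c : ℝ}
    (hA : ∀ j, ∑ i, ‖A i j‖ ≤ c) (s : 𝕜) (y : n → 𝕜) :
    (‖s‖ - c) * ∑ i, ‖y i‖ ≤ ∑ i, ‖((s • (1 : Matrix n n 𝕜) - A) *ᵥ y) i‖ := by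
  have hsy (i : n) : s * y i = ((s • (1 : Matrix n n 𝕜) - A) *ᵥ y) i + (A *ᵥ y) i := by
    simp [sub_mulVec, smul_mulVec]
  have htriangle : ‖s‖ * ∑ i, ‖y i‖ ≤
      ∑ i, ‖((s • (1 : Matrix n n 𝕜) - A) *ᵥ y) i‖ + ∑ i, ‖(A *ᵥ y) i‖ := by
    rw [mul_sum, ← sum_add_distrib]
    refine sum_le_sum fun i _ => ?_
    rw [← norm_mul, hsy]
    exact norm_add_le _ _
  linarith [sum_norm_mulVec_le hA y]

theorem sum_norm_smul_transpose_of_stochastic {P : Matrix m n ℝ} (hP : ∀ i j, 0 ≤ P i j)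
    (hstoch : ∀ i, ∑ j, P i j = 1) {a : ℝ} (ha : 0 ≤ a) (j : m) :
    ∑ i, ‖(a • Pᵀ) i j‖ = a := by
  have hentry (i : n) : ‖(a • Pᵀ) i j‖ = a * P j i := Real.norm_of_nonneg (mul_nonneg ha (hP j i))
  simp only [hentry, ← mul_sum, hstoch, mul_one]

end ColumnSums

section SOR

variable {ι : Type*} [Fintype ι] [DecidableEq ι]

theorem sum_univ_eq_add_sum_add_sum_filter {M : Type*} [AddCommMonoid M] {t : Finset ι} {i : ι}
    (hi : i ∉ t) (f : ι → M) :
    ∑ j, f j = f i + ∑ j ∈ t, f j + ∑ j with j ∉ t ∧ j ≠ i, f j := by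
  have hcompl : (insert i t)ᶜ = ({j | j ∉ t ∧ j ≠ i} : Finset ι) := by
    ext j
    simp [and_comm]
  rw [← sum_add_sum_compl (insert i t), sum_insert hi, hcompl]

variable {𝕜 : Type*} [NormedField 𝕜] {A : Matrix ι ι 𝕜} {b xbar x x' : ι → 𝕜} {s ω : 𝕜}
  {N : ι → Finset ι} {c : ℝ}

/-- The equations of an asynchronous SOR update from `x` to `x'` for the system
`(s • 1 - A) y = b` with relaxation parameter `ω`, where coordinate `i` is computed from the new
values on `N i` and from the old ones elsewhere. As `x'` occurs on both sides, this is a relation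
between `x` and `x'`, not a function of `x`. -/
def IsAsyncSORUpdate (A : Matrix ι ι 𝕜) (b : ι → 𝕜) (s ω : 𝕜) (N : ι → Finset ι)
    (x x' : ι → 𝕜) : Prop :=
  ∀ i, x' i = (1 - ω) * x i + (ω / (s - A i i)) *
    (b i + ∑ j ∈ N i, A i j * x' j + ∑ j with j ∉ N i ∧ j ≠ i, A i j * x j)

/-- The matrix taking the step `x' - x` of an asynchronous SOR update to the residual
`b - (s • 1 - A) x'`. -/
def asyncSORResidualMatrix (A : Matrix ι ι 𝕜) (s ω : 𝕜) (N : ι → Finset ι) : Matrix ι ι 𝕜 :=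
  of fun i j => if j = i then (ω⁻¹ - 1) * (s - A i i) else if j ∈ N i then 0 else A i j

theorem asyncSORResidualMatrix_mulVec_apply {i : ι} (hi : i ∉ N i) (y : ι → 𝕜) :
    (asyncSORResidualMatrix A s ω N *ᵥ y) i =
      (ω⁻¹ - 1) * (s - A i i) * y i + ∑ j with j ∉ N i ∧ j ≠ i, A i j * y j := by
  have hfresh : ∑ j ∈ N i, asyncSORResidualMatrix A s ω N i j * y j = 0 :=
    sum_eq_zero fun j hj => by
      simp [asyncSORResidualMatrix, hj, ne_of_mem_of_not_mem hj hi]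
  have hstale : ∑ j with j ∉ N i ∧ j ≠ i, asyncSORResidualMatrix A s ω N i j * y j =
      ∑ j with j ∉ N i ∧ j ≠ i, A i j * y j :=
    sum_congr rfl fun j hj => by
      obtain ⟨hjN, hji⟩ := (mem_filter.1 hj).2
      simp [asyncSORResidualMatrix, hjN, hji]
  rw [mulVec, dotProduct, sum_univ_eq_add_sum_add_sum_filter hi, hfresh, hstale, add_zero]
  simp [asyncSORResidualMatrix]

theorem IsAsyncSORUpdate.residual_eq (h : IsAsyncSORUpdate A b s ω N x x') (hω : ω ≠ 0)
    (hs : ∀ i, s ≠ A i i) (hN : ∀ i, i ∉ N i) :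
    b - (s • (1 : Matrix ι ι 𝕜) - A) *ᵥ x' = asyncSORResidualMatrix A s ω N *ᵥ (x' - x) := by
  ext i
  have hsolved : b i + ∑ j ∈ N i, A i j * x' j + ∑ j with j ∉ N i ∧ j ≠ i, A i j * x j =
      ω⁻¹ * (s - A i i) * (x' i - (1 - ω) * x i) := by
    have hd : s - A i i ≠ 0 := sub_ne_zero.2 (hs i)
    rw [h i]
    field_simp
    ring
  have hAx' : (A *ᵥ x') i = A i i * x' i + ∑ j ∈ N i, A i j * x' j +
      ∑ j with j ∉ N i ∧ j ≠ i, A i j * x' j :=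
    sum_univ_eq_add_sum_add_sum_filter (hN i) _
  rw [asyncSORResidualMatrix_mulVec_apply (hN i)]
  simp only [Pi.sub_apply, sub_mulVec, smul_mulVec, one_mulVec, Pi.smul_apply, smul_eq_mul,
    mul_sub, sum_sub_distrib, hAx']
  linear_combination hsolved + x i * (s - A i i) * inv_mul_cancel₀ hω

theorem sum_norm_asyncSORResidualMatrix_le (hA : ∀ j, ∑ i, ‖A i j‖ ≤ c) (s ω : 𝕜)
    (N : ι → Finset ι) (j : ι) :
    ∑ i, ‖asyncSORResidualMatrix A s ω N i j‖ ≤ c + ‖ω⁻¹ - 1‖ * (‖s‖ + c) := by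
  have hdiag : ‖A j j‖ ≤ c := norm_apply_le_of_sum_norm_le hA j j
  have hentry (i : ι) : ‖asyncSORResidualMatrix A s ω N i j‖ ≤
      ‖A i j‖ + if j = i then ‖ω⁻¹ - 1‖ * (‖s‖ + c) else 0 := by
    rw [asyncSORResidualMatrix, of_apply]
    split_ifs with hji hjN
    · subst hji
      have hsub : ‖s - A j j‖ ≤ ‖s‖ + c := (norm_sub_le _ _).trans (by gcongr)
      calc
        ‖(ω⁻¹ - 1) * (s - A j j)‖ ≤ ‖ω⁻¹ - 1‖ * (‖s‖ + c) := by
          rw [norm_mul]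
          gcongr
        _ ≤ ‖A j j‖ + ‖ω⁻¹ - 1‖ * (‖s‖ + c) := le_add_of_nonneg_left (norm_nonneg _)
    · simp
    · simp
  calc
    ∑ i, ‖asyncSORResidualMatrix A s ω N i j‖
      ≤ ∑ i, (‖A i j‖ + if j = i then ‖ω⁻¹ - 1‖ * (‖s‖ + c) else 0) :=
        sum_le_sum fun i _ => hentry i
    _ = ∑ i, ‖A i j‖ + ‖ω⁻¹ - 1‖ * (‖s‖ + c) := by simp [sum_add_distrib]
    _ ≤ c + ‖ω⁻¹ - 1‖ * (‖s‖ + c) := by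
      gcongr
      exact hA j

theorem pagerank_stepAsyncGaussSeidel_l1_bound_general (hA : ∀ j, ∑ i, ‖A i j‖ ≤ c)
    (hcs : c < ‖s‖) (hω : ω ≠ 0) (hxbar : (s • (1 : Matrix ι ι 𝕜) - A) *ᵥ xbar = b)
    (hN : ∀ i, i ∉ N i) (hupd : IsAsyncSORUpdate A b s ω N x x') :
    ∑ i, ‖xbar i - x' i‖ ≤
      (c + ‖ω⁻¹ - 1‖ * (‖s‖ + c)) / (‖s‖ - c) * ∑ i, ‖x' i - x i‖ := by
  have hs (i : ι) : s ≠ A i i := by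
    rintro rfl
    exact hcs.not_ge (norm_apply_le_of_sum_norm_le hA i i)
  have hresidual : (s • (1 : Matrix ι ι 𝕜) - A) *ᵥ (xbar - x') =
      asyncSORResidualMatrix A s ω N *ᵥ (x' - x) := by
    rw [mulVec_sub, hxbar, hupd.residual_eq hω hs hN]
  have hlower := sub_mul_sum_norm_le_sum_norm_smul_one_sub_mulVec hA s (xbar - x')
  have hupper := sum_norm_mulVec_le (sum_norm_asyncSORResidualMatrix_le hA s ω N) (x' - x)
  rw [hresidual] at hlower
  rw [div_mul_eq_mul_div, le_div_iff₀' (sub_pos.2 hcs)]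
  exact hlower.trans hupper

end SOR

theorem pagerank_stepAsyncGaussSeidel_l1_bound
    {ι : Type*} [Fintype ι] [Nonempty ι] [DecidableEq ι]
    (P : Matrix ι ι ℝ) (α : ℝ) (v xbar x x' : ι → ℝ)
    (hP : ∀ i j, 0 ≤ P i j)
    (hstoch : ∀ i, ∑ j, P i j = 1)
    (hα0 : 0 < α) (hα1 : α < 1)
    (hxbar : ((1 : Matrix ι ι ℝ) - α • Pᵀ).mulVec xbar = (1 - α) • v)
    (N : ι → Finset ι) (rnk : ι → ℕ)
    (hrank : ∀ i j, j ∈ N i → rnk j < rnk i)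
    (hupd : ∀ i, x' i = (1 - (1 : ℝ)) * x i + ((1 : ℝ) / (1 - (α • Pᵀ) i i)) *
      (((1 - α) • v) i + ∑ j ∈ N i, (α • Pᵀ) i j * x' j
           + ∑ j ∈ Finset.univ.filter (fun j => j ∉ N i ∧ j ≠ i), (α • Pᵀ) i j * x j)) :
    ∑ i, |xbar i - x' i| ≤ (α / (1 - α)) * ∑ i, |x' i - x i| := by
  simpa using pagerank_stepAsyncGaussSeidel_l1_bound_general (s := (1 : ℝ)) (ω := 1)
    (fun j => (sum_norm_smul_transpose_of_stochastic hP hstoch hα0.le j).le) (by simpa using hα1)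
    one_ne_zero (by rwa [one_smul]) (fun i hi => (hrank i i hi).false) hupd
end
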